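/- arXiv:1103.3938 — 2 statements merged into one kernel-verified Lean document; each statement's English description precedes it below -/
import Mathlib

section
/- Let n ≥ 3, let q_n = ((−1)^{n+1} + 2ⁿ)/3, and define the utility vector m on [n+1] by m_i = 2^i for 1 ≤ i ≤ n−2, m_{n−1} = q_n, m_n = 2^{n−1}, m_{n+1} = 2ⁿ, with induced comparative probability order ≼_m on subsets of [n+1] (A ≼_m B ⇔ ∑_{i∈A} m_i ≤ ∑_{i∈B} m_i). Then for every flippable pair (A,B) of ≼_m, the order obtained from ≼_m by flipping over (A,B) (reversing exactly the comparisons between A∪D and B∪D for every D disjoint from A∪B) is a representable comparative probability order. -/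
open Finset

/-- The strict part of a (total antisymmetric) order on subsets. -/
def cpLT {n : ℕ} (le : Finset (Fin n) → Finset (Fin n) → Prop)
    (A B : Finset (Fin n)) : Prop :=
  le A B ∧ A ≠ B

/-- `le` is a comparative probability order on `[n]`: a linear (total,
antisymmetric, transitive) order on the powerset of `[n]` with `∅ ≺ A` for
nonempty `A`, satisfying de Finetti's axiom. -/
def IsCPO {n : ℕ} (le : Finset (Fin n) → Finset (Fin n) → Prop) : Prop :=
  (∀ A B, le A B ∨ le B A) ∧
  (∀ A B, le A B → le B A → A = B) ∧
  (∀ A B C, le A B → le B C → le A C) ∧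
  (∀ A : Finset (Fin n), A ≠ ∅ → cpLT le ∅ A) ∧
  (∀ A B C : Finset (Fin n), Disjoint (A ∪ B) C → (le A B ↔ le (A ∪ C) (B ∪ C)))

/-- `(A,B)` is a critical pair: disjoint, `A ≺ B`, and no `C` with `A ≺ C ≺ B`. -/
def Critical {n : ℕ} (le : Finset (Fin n) → Finset (Fin n) → Prop)
    (A B : Finset (Fin n)) : Prop :=
  Disjoint A B ∧ cpLT le A B ∧ ¬ ∃ C, cpLT le A C ∧ cpLT le C B

/-- `(A,B)` is a flippable pair: critical, and for every `D` disjoint from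
`A ∪ B` the pair `(A ∪ D, B ∪ D)` is adjacent. -/
def Flippable {n : ℕ} (le : Finset (Fin n) → Finset (Fin n) → Prop)
    (A B : Finset (Fin n)) : Prop :=
  Critical le A B ∧
  ∀ D : Finset (Fin n), Disjoint D (A ∪ B) →
    ¬ ∃ C, cpLT le (A ∪ D) C ∧ cpLT le C (B ∪ D)

/-- The set of flippable pairs of an order. -/
def FlippablePairs {n : ℕ} (le : Finset (Fin n) → Finset (Fin n) → Prop) :
    Set (Finset (Fin n) × Finset (Fin n)) :=
  {p | Flippable le p.1 p.2}

/-- `le` is (additively) representable by a positive utility vector. -/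
def Representable {n : ℕ} (le : Finset (Fin n) → Finset (Fin n) → Prop) : Prop :=
  ∃ u : Fin n → ℝ, (∀ i, 0 < u i) ∧
    ∀ A B : Finset (Fin n), le A B ↔ ∑ i ∈ A, u i ≤ ∑ i ∈ B, u i

/-- `(X, Y) = (A ∪ D, B ∪ D)` for some `D` disjoint from `A ∪ B`. -/
def FlipRel {n : ℕ} (A B X Y : Finset (Fin n)) : Prop :=
  ∃ D : Finset (Fin n), Disjoint D (A ∪ B) ∧ X = A ∪ D ∧ Y = B ∪ D

/-- The relation obtained from `le` by flipping over the pair `(A,B)`: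
all comparisons between `A ∪ D` and `B ∪ D` (for `D` disjoint from `A ∪ B`)
are reversed, all other comparisons are kept. -/
def flipOrder {n : ℕ} (le : Finset (Fin n) → Finset (Fin n) → Prop)
    (A B : Finset (Fin n)) : Finset (Fin n) → Finset (Fin n) → Prop :=
  fun X Y => (le X Y ∧ ¬ FlipRel A B X Y) ∨ FlipRel A B Y X

/-- Utility (sum of weights) of a subset. -/
def usum {k : ℕ} (m : Fin k → ℕ) (A : Finset (Fin k)) : ℕ := ∑ i ∈ A, m i

/-- The order on subsets induced by a utility vector. -/
def uord {k : ℕ} (m : Fin k → ℕ) : Finset (Fin k) → Finset (Fin k) → Prop :=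
  fun A B => usum m A ≤ usum m B

/-- `qn n = ((−1)^(n+1) + 2^n) / 3` as a natural number. -/
def qn (n : ℕ) : ℕ := if n % 2 = 1 then (2 ^ n + 1) / 3 else (2 ^ n - 1) / 3

/-- The utility vector `m` on `[n+1]` (element `k` corresponds to index `k-1`):
`m_k = 2^k` for `1 ≤ k ≤ n−2`, `m_{n−1} = qn n`, `m_n = 2^(n−1)`, `m_{n+1} = 2^n`. -/
def mvec (n : ℕ) : Fin (n + 1) → ℕ := fun i =>
  if (i : ℕ) + 1 ≤ n - 2 then 2 ^ ((i : ℕ) + 1)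
  else if (i : ℕ) + 1 = n - 1 then qn n
  else if (i : ℕ) + 1 = n then 2 ^ (n - 1)
  else 2 ^ n

/-- Signed digit vectors. -/
def Dig {k : ℕ} (c : Fin k → ℤ) : Prop := ∀ i, c i = -1 ∨ c i = 0 ∨ c i = 1

/-- Integer dot product. -/
def dt {k : ℕ} (w c : Fin k → ℤ) : ℤ := ∑ i, w i * c i

lemma dt_le {k : ℕ} (v c : Fin k → ℤ) (hc : Dig c) : dt v c ≤ ∑ i, |v i| := by
  apply Finset.sum_le_sum
  intro i _
  have h1 := le_abs_self (v i)
  have h2 := neg_abs_le (v i)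
  rcases hc i with h | h | h <;> rw [h]
  · linarith
  · simp
  · linarith

lemma sum_two_pow_rev (k : ℕ) : ∑ i : Fin k, (2 : ℤ) ^ (k - 1 - (i : ℕ)) = 2 ^ k - 1 := by
  induction k with
  | zero => simp
  | succ k ih =>
    rw [Fin.sum_univ_succ]
    have : ∀ i : Fin k, (2 : ℤ) ^ (k + 1 - 1 - ((i.succ : Fin (k+1)) : ℕ)) = 2 ^ (k - 1 - (i : ℕ)) := by
      intro i; congr 1; simp only [Fin.val_succ]; omega
    simp only [this, ih]
    simp
    ring

lemma digits {k : ℕ} (c d : Fin k → ℤ) (hc : Dig c) (hd : Dig d)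
    (h : ∑ i : Fin k, (2 : ℤ) ^ (i : ℕ) * c i = ∑ i : Fin k, (2 : ℤ) ^ (i : ℕ) * d i) (hne : d ≠ c) :
    dt (fun i => c i * 2 ^ (k - 1 - (i : ℕ))) d < dt (fun i => c i * 2 ^ (k - 1 - (i : ℕ))) c := by
  induction k with
  | zero => exact absurd (Subsingleton.elim _ _) hne
  | succ k ih =>
    have e1 : ∀ x : Fin (k+1) → ℤ, dt (fun i => c i * 2 ^ (k + 1 - 1 - (i : ℕ))) x
        = c 0 * 2 ^ k * x 0 + dt (fun i : Fin k => c i.succ * 2 ^ (k - 1 - (i : ℕ))) (fun i => x i.succ) := by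
      intro x
      unfold dt
      rw [Fin.sum_univ_succ]
      congr 1
      apply Finset.sum_congr rfl
      intro i _
      have : k + 1 - 1 - ((i.succ : Fin (k+1)) : ℕ) = k - 1 - (i : ℕ) := by
        simp only [Fin.val_succ]; omega
      simp only [this]
    have e2 : ∀ x : Fin (k+1) → ℤ, ∑ i : Fin (k+1), (2 : ℤ) ^ (i : ℕ) * x i
        = x 0 + 2 * ∑ i : Fin k, (2 : ℤ) ^ (i : ℕ) * x i.succ := by
      intro x
      rw [Fin.sum_univ_succ, Finset.mul_sum]
      simp [pow_succ]
      apply Finset.sum_congr rfl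
      intro i _
      ring
    rw [e1, e1]
    rw [e2, e2] at h
    have hc' : Dig (fun i : Fin k => c i.succ) := fun i => hc _
    have hd' : Dig (fun i : Fin k => d i.succ) := fun i => hd _
    by_cases h0 : d 0 = c 0
    · have := ih (fun i => c i.succ) (fun i => d i.succ) hc' hd' (by
        rw [h0] at h; linarith) (by
        intro hh
        apply hne
        funext i
        refine Fin.cases h0 (fun i => ?_) i
        exact congrFun hh i)
      rw [h0]; linarith
    · have bd : ∑ i : Fin k, |c i.succ * 2 ^ (k - 1 - (i : ℕ))| ≤ 2 ^ k - 1 := by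
        rw [← sum_two_pow_rev]
        apply Finset.sum_le_sum
        intro i _
        rw [abs_mul, abs_of_pos (show (0:ℤ) < 2 ^ (k - 1 - (i : ℕ)) by positivity)]
        have : (0:ℤ) < 2 ^ (k - 1 - (i : ℕ)) := by positivity
        rcases hc i.succ with h | h | h <;> rw [h] <;> simp
      have b1 := dt_le (fun i : Fin k => c i.succ * 2 ^ (k - 1 - (i : ℕ))) _ hd'
      have b2 := dt_le (fun i : Fin k => c i.succ * 2 ^ (k - 1 - (i : ℕ))) (fun i => - c i.succ)
        (fun i => by have := hc i.succ; show - c i.succ = -1 ∨ - c i.succ = 0 ∨ - c i.succ = 1; omega)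
      have b3 : dt (fun i : Fin k => c i.succ * 2 ^ (k - 1 - (i : ℕ))) (fun i => - c i.succ)
        = - dt (fun i : Fin k => c i.succ * 2 ^ (k - 1 - (i : ℕ))) (fun i => c i.succ) := by
        simp [dt]
      generalize (∑ i : Fin k, (2 : ℤ) ^ (i : ℕ) * c i.succ) = P at h
      generalize (∑ i : Fin k, (2 : ℤ) ^ (i : ℕ) * d i.succ) = Q at h
      rcases hc 0 with h1 | h1 | h1 <;> rcases hd 0 with h2 | h2 | h2 <;> rw [h1, h2] at h h0 ⊢ <;>
        first | omega | linarith

lemma dt_split {n : ℕ} (p : Fin (n+1)) (w c : Fin (n+1) → ℤ) :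
    dt w c = w p * c p + dt (fun i => w (p.succAbove i)) (fun i => c (p.succAbove i)) := by
  unfold dt; rw [Fin.sum_univ_succAbove _ p]

lemma dt_pow {n : ℕ} (p : Fin (n+1)) (m c : Fin (n+1) → ℤ)
    (hm : ∀ i : Fin n, m (p.succAbove i) = 2 ^ ((i : ℕ) + 1)) :
    dt m c = m p * c p + 2 * ∑ i : Fin n, (2 : ℤ) ^ (i : ℕ) * c (p.succAbove i) := by
  rw [dt_split p]
  congr 1
  unfold dt
  rw [Finset.mul_sum]
  apply Finset.sum_congr rfl
  intro i _
  simp only [hm]; ring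

lemma ext_succAbove {n : ℕ} (p : Fin (n+1)) (c d : Fin (n+1) → ℤ) (h0 : c p = d p)
    (h : ∀ i, c (p.succAbove i) = d (p.succAbove i)) : c = d := by
  funext j
  rcases Fin.eq_self_or_eq_succAbove p j with rfl | ⟨i, rfl⟩
  · exact h0
  · exact h i

lemma exists_w {n : ℕ} (p : Fin (n+1)) (m c0 : Fin (n+1) → ℤ)
    (hm : ∀ i : Fin n, m (p.succAbove i) = 2 ^ ((i : ℕ) + 1)) (hq : m p % 2 = 1)
    (hc0 : Dig c0) (h1 : dt m c0 = 1) :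
    ∃ w : Fin (n+1) → ℤ, dt w c0 < 0 ∧ ∀ c, Dig c → 0 < dt m c → c ≠ c0 → 0 < dt w c := by
  set s := c0 p with hs
  set g : Fin n → ℤ := fun i => c0 (p.succAbove i) * 2 ^ (n - 1 - (i : ℕ)) with hg
  set V := dt g (fun i => c0 (p.succAbove i)) with hV
  have hodd : ∀ c, dt m c = 1 → c p ≠ 0 := by
    intro c hc h
    rw [dt_pow p m c hm, h] at hc
    omega
  have hs1 : s = -1 ∨ s = 1 := by
    have := hodd c0 h1
    rcases hc0 p with h | h | h
    · left; exact h
    · exact absurd h this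
    · right; exact h
  set v : Fin (n+1) → ℤ := p.insertNth (s * (1 - 2 * V)) (fun i => 2 * g i) with hv
  have hvc : ∀ c, dt v c = s * (1 - 2 * V) * c p + 2 * dt g (fun i => c (p.succAbove i)) := by
    intro c
    rw [dt_split p]
    simp only [hv, Fin.insertNth_apply_same, Fin.insertNth_apply_succAbove]
    congr 1
    unfold dt
    rw [Finset.mul_sum]
    apply Finset.sum_congr rfl
    intro i _; ring
  set N := ∑ i, |v i| + 1 with hN
  have hss : s * s = 1 := by rcases hs1 with h | h <;> rw [h] <;> norm_num
  have hw : ∀ c, dt (fun i => N * (m i - if i = p then s else 0) - v i) c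
      = N * (dt m c - s * c p) - dt v c := by
    intro c
    have : s * c p = ∑ i, (if i = p then s else 0) * c i := by simp
    rw [this]
    unfold dt
    rw [← Finset.sum_sub_distrib, Finset.mul_sum, ← Finset.sum_sub_distrib]
    apply Finset.sum_congr rfl
    intro i _; ring
  have hNpos : 0 < N := by
    have : 0 ≤ ∑ i, |v i| := Finset.sum_nonneg (fun i _ => abs_nonneg _)
    omega
  refine ⟨fun i => N * (m i - if i = p then s else 0) - v i, ?_, ?_⟩
  · rw [hw, hvc, h1, ← hs, hss, ← hV]
    have : s * (1 - 2 * V) * s = (s * s) * (1 - 2 * V) := by ring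
    rw [this, hss]; ring_nf; norm_num
  · intro c hc hpos hne
    rw [hw]
    by_cases htie : dt m c = 1 ∧ c p = s
    · obtain ⟨ht, hcp⟩ := htie
      rw [ht, hcp, hss, hvc, hcp]
      have : s * (1 - 2 * V) * s = (s * s) * (1 - 2 * V) := by ring
      rw [this, hss]
      have := digits (fun i => c0 (p.succAbove i)) (fun i => c (p.succAbove i))
        (fun i => hc0 _) (fun i => hc _) (by
          rw [dt_pow p m _ hm] at ht h1
          rw [hcp] at ht
          rw [← hs] at h1
          linarith) (by
          intro hh
          apply hne
          exact ext_succAbove p _ _ hcp (fun i => congrFun hh i))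
      linarith
    · have h2 : 1 ≤ dt m c - s * c p := by
        by_cases h1' : dt m c = 1
        · have h3 := hodd c h1'
          have h4 : c p ≠ s := fun h => htie ⟨h1', h⟩
          rw [h1']
          rcases hs1 with h | h <;> rw [h] at h4 ⊢ <;> rcases hc p with h' | h' | h' <;> omega
        · rcases hs1 with h | h <;> rw [h] <;> rcases hc p with h' | h' | h' <;> omega
      have := dt_le v c hc
      nlinarith

/-- Indicator vector. -/
def chi {k : ℕ} (S : Finset (Fin k)) : Fin k → ℤ := fun i => if i ∈ S then 1 else 0

lemma dt_chi {k : ℕ} (w : Fin k → ℤ) (S : Finset (Fin k)) : dt w (chi S) = ∑ i ∈ S, w i := by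
  simp [dt, chi]

lemma dt_sub {k : ℕ} (w x y : Fin k → ℤ) : dt w (x - y) = dt w x - dt w y := by
  simp [dt, mul_sub]

lemma dt_neg {k : ℕ} (w x : Fin k → ℤ) : dt w (-x) = - dt w x := by
  simp [dt]

lemma dig_sub {k : ℕ} (X Y : Finset (Fin k)) : Dig (chi Y - chi X) := by
  intro i
  simp only [Pi.sub_apply, chi]
  split_ifs <;> simp

lemma flip_iff {k : ℕ} (A B X Y : Finset (Fin k)) (hd : Disjoint A B) :
    FlipRel A B X Y ↔ chi Y - chi X = chi B - chi A := by
  have hd' : ∀ i, i ∈ A → i ∉ B := fun i h1 h2 => Finset.disjoint_left.1 hd h1 h2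
  constructor
  · rintro ⟨D, hD, rfl, rfl⟩
    funext i
    have : i ∈ D → i ∉ A ∧ i ∉ B := fun h => by
      have := Finset.disjoint_left.1 hD h
      simpa using this
    have h2 := hd' i
    simp only [Pi.sub_apply, chi, Finset.mem_union]
    by_cases a : i ∈ A <;> by_cases b : i ∈ B <;> by_cases d : i ∈ D <;> simp_all
  · intro h
    have key : ∀ i, (i ∈ A ↔ i ∈ X ∧ i ∉ Y) ∧ (i ∈ B ↔ i ∈ Y ∧ i ∉ X) := by
      intro i
      have h1 := congrFun h i
      have h2 := hd' i
      simp only [Pi.sub_apply, chi] at h1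
      by_cases a : i ∈ A <;> by_cases b : i ∈ B <;> by_cases x : i ∈ X <;> by_cases y : i ∈ Y <;>
        simp_all
    refine ⟨X ∩ Y, ?_, ?_, ?_⟩
    · rw [Finset.disjoint_left]
      intro i hi
      have := key i
      simp only [Finset.mem_inter, Finset.mem_union] at hi ⊢
      tauto
    · ext i
      have := key i
      simp only [Finset.mem_inter, Finset.mem_union]
      tauto
    · ext i
      have := key i
      simp only [Finset.mem_inter, Finset.mem_union]
      tauto

lemma chi_inj {k : ℕ} {X Y : Finset (Fin k)} (h : chi Y - chi X = 0) : X = Y := by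
  ext i
  have := congrFun h i
  simp only [Pi.sub_apply, chi, Pi.zero_apply] at this
  by_cases x : i ∈ X <;> by_cases y : i ∈ Y <;> simp_all

lemma usum_dt {k : ℕ} (m : Fin k → ℕ) (X : Finset (Fin k)) :
    (usum m X : ℤ) = dt (fun i => (m i : ℤ)) (chi X) := by
  rw [dt_chi]; simp [usum]

lemma flip_rep {k : ℕ} (m : Fin k → ℕ) (A B : Finset (Fin k)) (w : Fin k → ℤ)
    (hinj : ∀ c, Dig c → dt (fun i => (m i : ℤ)) c = 0 → c = 0)
    (hd : Disjoint A B) (h1 : dt (fun i => (m i : ℤ)) (chi B - chi A) = 1)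
    (hm : ∀ i, 2 ≤ m i)
    (hw0 : dt w (chi B - chi A) < 0)
    (hw : ∀ c, Dig c → 0 < dt (fun i => (m i : ℤ)) c → c ≠ chi B - chi A → 0 < dt w c) :
    IsCPO (flipOrder (uord m) A B) ∧ Representable (flipOrder (uord m) A B) := by
  have hDneg : ∀ c : Fin k → ℤ, Dig c → Dig (-c) := by
    intro c hc i
    have := hc i
    simp only [Pi.neg_apply]
    omega
  have hwinj : ∀ c, Dig c → dt w c = 0 → c = 0 := by
    intro c hc h
    by_contra hne
    rcases lt_trichotomy (dt (fun i => (m i : ℤ)) c) 0 with h2 | h2 | h2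
    · have h3 := hw (-c) (hDneg c hc) (by rw [dt_neg]; omega)
      rw [dt_neg] at h3
      by_cases h4 : -c = chi B - chi A
      · rw [← h4, dt_neg] at hw0; omega
      · have := h3 h4; omega
    · exact hne (hinj c hc h2)
    · have h3 := hw c hc h2
      by_cases h4 : c = chi B - chi A
      · rw [← h4] at hw0; omega
      · have := h3 h4; omega
  have hwpos : ∀ i, 0 < w i := by
    intro i
    have e : ∀ u : Fin k → ℤ, dt u (chi {i}) = u i := by intro u; simp [dt_chi]
    rw [← e w]
    apply hw
    · intro j; simp only [chi]; split_ifs <;> simp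
    · rw [e]; have := hm i; omega
    · intro h
      rw [← h, e] at h1
      have := hm i; omega
  have hrep : ∀ X Y, flipOrder (uord m) A B X Y ↔ ∑ i ∈ X, w i ≤ ∑ i ∈ Y, w i := by
    intro X Y
    unfold flipOrder
    rw [flip_iff A B X Y hd, flip_iff A B Y X hd]
    have e1 : uord m X Y ↔ 0 ≤ dt (fun i => (m i : ℤ)) (chi Y - chi X) := by
      rw [dt_sub, ← usum_dt, ← usum_dt]; unfold uord; omega
    have e2 : ∑ i ∈ X, w i ≤ ∑ i ∈ Y, w i ↔ 0 ≤ dt w (chi Y - chi X) := by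
      rw [dt_sub, dt_chi, dt_chi]; omega
    rw [e1, e2, show chi X - chi Y = -(chi Y - chi X) by simp]
    have hc := dig_sub X Y
    generalize chi Y - chi X = c at hc
    rcases lt_trichotomy (dt (fun i => (m i : ℤ)) c) 0 with h2 | h2 | h2
    · have h3 := hw (-c) (hDneg c hc) (by rw [dt_neg]; omega)
      rw [dt_neg] at h3
      by_cases h4 : -c = chi B - chi A
      · rw [← h4, dt_neg] at hw0
        simp only [h4, or_true, true_iff]; omega
      · have := h3 h4
        simp only [h4, or_false]
        constructor
        · rintro ⟨h, -⟩; omega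
        · intro h; omega
    · have := hinj c hc h2
      subst this
      have z : ∀ u : Fin k → ℤ, dt u 0 = 0 := by intro u; simp [dt]
      have : (0 : Fin k → ℤ) ≠ chi B - chi A := by
        intro h; rw [← h, z] at h1; omega
      simp [z, this]
    · have h3 := hw c hc h2
      by_cases h4 : c = chi B - chi A
      · have : -c ≠ chi B - chi A := by
          intro h
          rw [← h, dt_neg, h4] at h1
          rw [h4] at h2; omega
        simp only [this, or_false]
        rw [h4]
        constructor
        · rintro ⟨_, h⟩; exact absurd rfl h
        · intro h; omega
      · have := h3 h4
        have h5 : 0 ≤ dt w c := by omega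
        simp only [h5, iff_true]
        left
        exact ⟨by omega, h4⟩
  refine ⟨⟨?_, ?_, ?_, ?_, ?_⟩, fun i => (w i : ℝ), ?_, ?_⟩
  · intro X Y; rw [hrep, hrep]; exact le_total _ _
  · intro X Y; rw [hrep, hrep]
    intro a b
    apply chi_inj
    apply hwinj _ (dig_sub _ _)
    rw [dt_sub, dt_chi, dt_chi]; omega
  · intro X Y Z; rw [hrep, hrep, hrep]; exact le_trans
  · intro X hX
    refine ⟨?_, fun h => hX h.symm⟩
    rw [hrep, Finset.sum_empty]
    exact Finset.sum_nonneg (fun i _ => (hwpos i).le)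
  · intro X Y C hC
    rw [Finset.disjoint_union_left] at hC
    rw [hrep, hrep, Finset.sum_union hC.1, Finset.sum_union hC.2]
    omega
  · intro i; show (0:ℝ) < (w i : ℝ); exact_mod_cast hwpos i
  · intro X Y
    rw [hrep]
    beta_reduce
    norm_cast

lemma exists_bits (n : ℕ) (x : ℤ) (h0 : 0 ≤ x) (hx : x < 2 ^ n) :
    ∃ f : Fin n → ℤ, (∀ i, f i = 0 ∨ f i = 1) ∧ ∑ i : Fin n, (2 : ℤ) ^ (i : ℕ) * f i = x := by
  induction n generalizing x with
  | zero => refine ⟨fun i => 0, fun i => Or.inl rfl, ?_⟩; simp at hx ⊢; omega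
  | succ n ih =>
    obtain ⟨f, hf, hs⟩ := ih (x / 2) (by omega) (by rw [pow_succ] at hx; omega)
    refine ⟨Fin.cons (x % 2) f, ?_, ?_⟩
    · intro i
      refine Fin.cases ?_ (fun i => ?_) i
      · simp only [Fin.cons_zero]; omega
      · simp only [Fin.cons_succ]; exact hf i
    · rw [Fin.sum_univ_succ]
      simp only [Fin.cons_zero, Fin.cons_succ, Fin.val_zero, Fin.val_succ, pow_succ]
      have : ∑ i : Fin n, (2 : ℤ) ^ (i : ℕ) * 2 * f i = 2 * (x / 2) := by
        rw [← hs, Finset.mul_sum]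
        apply Finset.sum_congr rfl; intro i _; ring
      rw [this]; omega

lemma exists_set {n : ℕ} (p : Fin (n+1)) (m : Fin (n+1) → ℤ)
    (hm : ∀ i : Fin n, m (p.succAbove i) = 2 ^ ((i : ℕ) + 1)) (e x : ℤ) (he : e = 0 ∨ e = 1)
    (h0 : 0 ≤ x) (hx : x < 2 ^ n) :
    ∃ C : Finset (Fin (n+1)), dt m (chi C) = m p * e + 2 * x := by
  obtain ⟨f, hf, hs⟩ := exists_bits n x h0 hx
  set g : Fin (n+1) → ℤ := p.insertNth e f with hg
  have hgv : ∀ i, g i = 0 ∨ g i = 1 := by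
    intro i
    rcases Fin.eq_self_or_eq_succAbove p i with rfl | ⟨i, rfl⟩
    · simpa [hg] using he
    · simpa [hg] using hf i
  refine ⟨Finset.univ.filter (fun i => g i = 1), ?_⟩
  have : chi (Finset.univ.filter (fun i => g i = 1)) = g := by
    funext i
    simp only [chi, Finset.mem_filter, Finset.mem_univ, true_and]
    rcases hgv i with h | h <;> simp [h]
  rw [this, dt_pow p m g hm]
  simp only [hg, Fin.insertNth_apply_same, Fin.insertNth_apply_succAbove, hs]

lemma dt_inj {n : ℕ} (p : Fin (n+1)) (m : Fin (n+1) → ℤ)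
    (hm : ∀ i : Fin n, m (p.succAbove i) = 2 ^ ((i : ℕ) + 1)) (hq : m p % 2 = 1)
    (hb : 0 < m p) : ∀ c, Dig c → dt m c = 0 → c = 0 := by
  intro c hc h
  rw [dt_pow p m c hm] at h
  have h0 : c p = 0 := by
    rcases hc p with h' | h' | h' <;> rw [h'] at h
    · omega
    · exact h'
    · omega
  rw [h0] at h
  have hz : Dig (fun _ : Fin n => (0 : ℤ)) := fun i => by simp
  by_contra hne
  have := digits (fun _ => 0) (fun i => c (p.succAbove i)) hz (fun i => hc _)
    (by simp; linarith) (by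
      intro hh
      exact hne (ext_succAbove p _ _ h0 (fun i => congrFun hh i)))
  simp [dt] at this

lemma sum_two_pow (k : ℕ) : ∑ i : Fin k, (2 : ℤ) ^ (i : ℕ) = 2 ^ k - 1 := by
  induction k with
  | zero => simp
  | succ k ih => rw [Fin.sum_univ_castSucc]; simp [ih]; ring

lemma pow_bounds {n : ℕ} (f : Fin n → ℤ) (hf : ∀ i, f i = 0 ∨ f i = 1) :
    0 ≤ ∑ i : Fin n, (2 : ℤ) ^ (i : ℕ) * f i ∧ ∑ i : Fin n, (2 : ℤ) ^ (i : ℕ) * f i ≤ 2 ^ n - 1 := by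
  constructor
  · apply Finset.sum_nonneg
    intro i _
    rcases hf i with h | h <;> simp [h]
  · rw [← sum_two_pow]
    apply Finset.sum_le_sum
    intro i _
    rcases hf i with h | h <;> simp [h]

lemma chi01 {k : ℕ} (S : Finset (Fin k)) (i : Fin k) : chi S i = 0 ∨ chi S i = 1 := by
  unfold chi; split_ifs <;> simp

lemma cplt_iff {k : ℕ} (m : Fin k → ℕ) (X Y : Finset (Fin k))
    (hinj : ∀ c, Dig c → dt (fun i => (m i : ℤ)) c = 0 → c = 0) :
    cpLT (uord m) X Y ↔ dt (fun i => (m i : ℤ)) (chi X) < dt (fun i => (m i : ℤ)) (chi Y) := by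
  unfold cpLT uord
  rw [← usum_dt, ← usum_dt]
  constructor
  · rintro ⟨h1, h2⟩
    rcases lt_or_eq_of_le h1 with h | h
    · exact_mod_cast h
    · exfalso
      apply h2
      apply chi_inj
      apply hinj _ (dig_sub _ _)
      rw [dt_sub, ← usum_dt, ← usum_dt, h]; simp
  · intro h
    refine ⟨by omega, ?_⟩
    rintro rfl
    omega

set_option maxHeartbeats 1000000 in
lemma flippable_one {n : ℕ} (p : Fin (n+1)) (m : Fin (n+1) → ℕ)
    (hm : ∀ i : Fin n, (m (p.succAbove i) : ℤ) = 2 ^ ((i : ℕ) + 1)) (hq : (m p : ℤ) % 2 = 1)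
    (hb : 0 < m p) (hb2 : (m p : ℤ) < 2 ^ n) (A B : Finset (Fin (n+1)))
    (hf : Flippable (uord m) A B) : dt (fun i => (m i : ℤ)) (chi B - chi A) = 1 := by
  have hinj := dt_inj p (fun i => (m i : ℤ)) hm hq (by simpa using hb)
  obtain ⟨⟨hdis, hlt, hno⟩, hD⟩ := hf
  simp only [cplt_iff m _ _ hinj] at hlt hno hD
  have hS : ∀ S, dt (fun i => (m i : ℤ)) (chi S) = _ := fun S => dt_pow p _ (chi S) hm
  have hbd : ∀ S : Finset (Fin (n+1)), _ := fun S =>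
    pow_bounds (fun i => chi S (p.succAbove i)) (fun i => chi01 _ _)
  have hA := hS A
  have hB := hS B
  have bA := hbd A
  have bB := hbd B
  rw [dt_sub]
  by_cases pA : p ∈ A
  · have pB : p ∉ B := Finset.disjoint_left.1 hdis pA
    have cA : chi A p = 1 := by simp [chi, pA]
    have cB : chi B p = 0 := by simp [chi, pB]
    simp only [cA, cB] at hA hB
    by_contra hne
    have : 0 ≤ ∑ i : Fin n, (2 : ℤ) ^ (i : ℕ) * chi B (p.succAbove i) - 1 := by omega
    obtain ⟨C, hC⟩ := exists_set p (fun i => (m i : ℤ)) hm 0 (∑ i : Fin n, (2 : ℤ) ^ (i : ℕ) * chi B (p.succAbove i) - 1)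
      (Or.inl rfl) this (by omega)
    exact hno ⟨C, by omega, by omega⟩
  · have cA : chi A p = 0 := by simp [chi, pA]
    by_cases pB : p ∈ B
    · have cB : chi B p = 1 := by simp [chi, pB]
      simp only [cA, cB] at hA hB
      by_contra hne
      have hsum : ∑ i : Fin n, (2 : ℤ) ^ (i : ℕ) * chi A (p.succAbove i)
          + ∑ i : Fin n, (2 : ℤ) ^ (i : ℕ) * chi B (p.succAbove i) ≤ 2 ^ n - 1 := by
        rw [← sum_two_pow, ← Finset.sum_add_distrib]
        apply Finset.sum_le_sum
        intro i _
        have := fun h : p.succAbove i ∈ A => Finset.disjoint_left.1 hdis h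
        unfold chi
        split_ifs <;> simp_all
      obtain ⟨C, hC⟩ := exists_set p (fun i => (m i : ℤ)) hm 0 (∑ i : Fin n, (2 : ℤ) ^ (i : ℕ) * chi A (p.succAbove i) + 1)
        (Or.inl rfl) (by omega) (by omega)
      exact hno ⟨C, by omega, by omega⟩
    · exfalso
      have cB : chi B p = 0 := by simp [chi, pB]
      simp only [cA, cB] at hA hB
      set D : Finset (Fin (n+1)) := (A ∪ B ∪ {p})ᶜ with hDdef
      have hDd : Disjoint D (A ∪ B) := by
        rw [Finset.disjoint_left]
        intro i hi
        simp only [hDdef, Finset.mem_compl, Finset.mem_union] at hi ⊢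
        tauto
      have hno2 := hD D hDd
      have pD : p ∉ D := by simp [hDdef]
      have hA2 := hS (A ∪ D)
      have hB2 := hS (B ∪ D)
      have cAD : chi (A ∪ D) p = 0 := by simp [chi, pA, pD]
      have cBD : chi (B ∪ D) p = 0 := by simp [chi, pB, pD]
      simp only [cAD, cBD] at hA2 hB2
      have tot : ∀ i, chi A (p.succAbove i) + chi (B ∪ D) (p.succAbove i) = 1 := by
        intro i
        have h1 := fun h : p.succAbove i ∈ A => Finset.disjoint_left.1 hdis h
        have h2 : p.succAbove i ∈ D ↔ p.succAbove i ∉ A ∧ p.succAbove i ∉ B := by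
          simp [hDdef]
        simp only [chi, Finset.mem_union, h2]
        by_cases a : p.succAbove i ∈ A <;> by_cases b : p.succAbove i ∈ B <;> simp_all
      have hsum : ∑ i : Fin n, (2 : ℤ) ^ (i : ℕ) * chi A (p.succAbove i)
          + ∑ i : Fin n, (2 : ℤ) ^ (i : ℕ) * chi (B ∪ D) (p.succAbove i) = 2 ^ n - 1 := by
        rw [← sum_two_pow, ← Finset.sum_add_distrib]
        apply Finset.sum_congr rfl
        intro i _
        rw [← mul_add, tot, mul_one]
      have hle : ∑ i : Fin n, (2 : ℤ) ^ (i : ℕ) * chi A (p.succAbove i)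
          + ∑ i : Fin n, (2 : ℤ) ^ (i : ℕ) * chi B (p.succAbove i) ≤ 2 ^ n - 1 := by
        rw [← hsum]
        gcongr with i _
        simp only [chi, Finset.mem_union]
        by_cases b : p.succAbove i ∈ B
        · simp [b]
        · simp only [b, if_false]; split_ifs <;> norm_num
      have hdiff : dt (fun i => (m i : ℤ)) (chi (B ∪ D)) - dt (fun i => (m i : ℤ)) (chi (A ∪ D))
          = dt (fun i => (m i : ℤ)) (chi B) - dt (fun i => (m i : ℤ)) (chi A) := by
        rw [← dt_sub, ← dt_sub, (flip_iff A B (A ∪ D) (B ∪ D) hdis).1 ⟨D, hDd, rfl, rfl⟩]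
      have bBD := hbd (B ∪ D)
      obtain ⟨C, hC⟩ := exists_set p (fun i => (m i : ℤ)) hm 1
        (∑ i : Fin n, (2 : ℤ) ^ (i : ℕ) * chi (B ∪ D) (p.succAbove i) - ((m p : ℤ) + 1) / 2)
        (Or.inr rfl) (by omega) (by omega)
      exact hno2 ⟨C, by omega, by omega⟩

lemma qn_three (n : ℕ) : 3 * qn n = 2 ^ n + 1 ∨ 3 * qn n + 1 = 2 ^ n := by
  have h4 : ∀ k, (4 : ℕ) ^ k % 3 = 1 := by
    intro k; rw [Nat.pow_mod]; simp
  unfold qn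
  rcases Nat.even_or_odd' n with ⟨k, rfl | rfl⟩
  · right
    have := h4 k
    rw [if_neg (by omega), pow_mul]
    have hpos : 0 < 4 ^ k := by positivity
    norm_num
    generalize 4 ^ k = x at *
    omega
  · left
    have := h4 k
    rw [pow_succ, pow_mul]
    rw [if_pos (by omega)]
    norm_num
    omega

lemma mvec_succAbove {n : ℕ} (hn : 3 ≤ n) (i : Fin n) :
    mvec n ((⟨n - 2, by omega⟩ : Fin (n+1)).succAbove i) = 2 ^ ((i : ℕ) + 1) := by
  have hi := i.2
  have hv : (((⟨n - 2, by omega⟩ : Fin (n+1)).succAbove i : Fin (n+1)) : ℕ)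
      = if (i : ℕ) < n - 2 then (i : ℕ) else (i : ℕ) + 1 := by
    unfold Fin.succAbove
    simp only [Fin.lt_def, Fin.val_castSucc]
    split_ifs <;> simp
  unfold mvec
  rw [hv]
  split_ifs <;> first | omega | rfl | (congr 1; omega)

/-- For `n ≥ 3`, flipping the order `≼_{mvec n}` over any of its flippable pairs
yields a representable comparative probability order. -/
theorem stmt5 {n : ℕ} (hn : 3 ≤ n) (A B : Finset (Fin (n + 1)))
    (hf : Flippable (uord (mvec n)) A B) :
    IsCPO (flipOrder (uord (mvec n)) A B) ∧
    Representable (flipOrder (uord (mvec n)) A B) := by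

  have h8 : 2 ^ 3 ≤ 2 ^ n := Nat.pow_le_pow_right (by norm_num) hn
  have hev : 2 ^ n % 2 = 0 := by
    obtain ⟨k, rfl⟩ : ∃ k, n = k + 1 := ⟨n - 1, by omega⟩
    rw [pow_succ]; omega
  have hq3 := qn_three n
  have hp : mvec n (⟨n - 2, by omega⟩ : Fin (n+1)) = qn n := by
    unfold mvec
    simp only
    rw [if_neg (by omega), if_pos (by omega)]
  have hq : ((mvec n (⟨n - 2, by omega⟩ : Fin (n+1)) : ℕ) : ℤ) % 2 = 1 := by
    rw [hp]; omega
  have hm : ∀ i : Fin n, ((mvec n ((⟨n - 2, by omega⟩ : Fin (n+1)).succAbove i) : ℕ) : ℤ)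
      = 2 ^ ((i : ℕ) + 1) := by
    intro i; rw [mvec_succAbove hn i]; push_cast; rfl
  have hb : 0 < mvec n (⟨n - 2, by omega⟩ : Fin (n+1)) := by rw [hp]; omega
  have hb2 : ((mvec n (⟨n - 2, by omega⟩ : Fin (n+1)) : ℕ) : ℤ) < 2 ^ n := by
    rw [hp]
    have : qn n < 2 ^ n := by omega
    exact_mod_cast this
  have h1 := flippable_one _ (mvec n) hm hq hb hb2 A B hf
  obtain ⟨w, hw0, hw⟩ := exists_w _ (fun i => (mvec n i : ℤ)) (chi B - chi A) hm hq
    (dig_sub A B) h1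
  refine flip_rep (mvec n) A B w (dt_inj _ _ hm hq (by exact_mod_cast hb)) hf.1.1 h1 ?_ hw0 hw
  intro i
  rcases Fin.eq_self_or_eq_succAbove (⟨n - 2, by omega⟩ : Fin (n+1)) i with rfl | ⟨j, rfl⟩
  · rw [hp]; omega
  · rw [mvec_succAbove hn, pow_succ]
    have : 0 < 2 ^ (j : ℕ) := by positivity
    omega
end

section
/- Let n ≥ 3, let q_n = ((−1)^{n+1} + 2ⁿ)/3, and define the utility vector m on [n+1] by m_i = 2^i for 1 ≤ i ≤ n−2, m_{n−1} = q_n, m_n = 2^{n−1}, m_{n+1} = 2ⁿ, with induced comparative probability order ≼_m on subsets of [n+1]. Let g_n be the number of ordered pairs (A,B) of disjoint subsets of [n] with ∑_{i∈B} 2^i − ∑_{i∈A} 2^i = q_n + 1, and let h_n be the number of ordered pairs (A,B) of disjoint subsets of [n] with ∑_{i∈B} 2^i − ∑_{i∈A} 2^i = q_n − 1. Then the number of flippable pairs of ≼_m equals g_n + h_n. -/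
open Finset

/-- Ordered pairs `(A,B)` of disjoint subsets of `[n]` (element `k` has utility
`2^k`, i.e. index `i` has utility `2^(i+1)`) with utility difference `d`. -/
def diffPairs (n : ℕ) (d : ℕ) : Set (Finset (Fin n) × Finset (Fin n)) :=
  {p | Disjoint p.1 p.2 ∧
    ∑ i ∈ p.2, 2 ^ ((i : ℕ) + 1) = (∑ i ∈ p.1, 2 ^ ((i : ℕ) + 1)) + d}

/-- `g n`: the number of disjoint pairs with utility difference `qn n + 1`. -/
noncomputable def gfun (n : ℕ) : ℕ := (diffPairs n (qn n + 1)).ncard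

/-- `h n`: the number of disjoint pairs with utility difference `qn n − 1`. -/
noncomputable def hfun (n : ℕ) : ℕ := (diffPairs n (qn n - 1)).ncard

theorem qn_facts {n : ℕ} (hn : 3 ≤ n) : qn n % 2 = 1 ∧ qn n < 2 ^ (n - 1) := by
  have h4 : ∀ k : ℕ, ∃ j, 4 ^ k = 3 * j + 1 := by
    intro k
    induction k with
    | zero => exact ⟨0, by norm_num⟩
    | succ k ih =>
      obtain ⟨j, hj⟩ := ih
      exact ⟨4 * j + 1, by rw [pow_succ, hj]; ring⟩
  rcases Nat.even_or_odd' n with ⟨k, rfl | rfl⟩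
  · obtain ⟨l, rfl⟩ : ∃ l, k = l + 1 := ⟨k - 1, by omega⟩
    obtain ⟨j, hj⟩ := h4 l
    have e1 : 2 ^ (2 * (l + 1)) = 4 * 4 ^ l := by
      rw [pow_mul, pow_succ]; norm_num; ring
    have e2 : 2 ^ (2 * (l + 1) - 1) = 2 * 4 ^ l := by
      have : 2 * (l + 1) - 1 = 2 * l + 1 := by omega
      rw [this, pow_succ, pow_mul]; norm_num; ring
    have h0 : ¬ (2 * (l + 1)) % 2 = 1 := by omega
    have e3 : 4 * 4 ^ l = 3 * (4 * j + 1) + 1 := by rw [hj]; ring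
    rw [qn, if_neg h0, e1, e2]
    omega
  · obtain ⟨l, rfl⟩ : ∃ l, k = l + 1 := ⟨k - 1, by omega⟩
    obtain ⟨j, hj⟩ := h4 l
    have e1 : 2 ^ (2 * (l + 1) + 1) = 8 * 4 ^ l := by
      rw [pow_succ, pow_mul, pow_succ]; norm_num; ring
    have e2 : 2 ^ (2 * (l + 1) + 1 - 1) = 4 * 4 ^ l := by
      rw [Nat.add_sub_cancel, pow_mul, pow_succ]; norm_num; ring
    have h0 : (2 * (l + 1) + 1) % 2 = 1 := by omega
    rw [qn, if_pos h0, e1, e2]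
    omega

/-- Sum of the even weights. -/
def esum {n : ℕ} (A : Finset (Fin n)) : ℕ := ∑ i ∈ A, 2 ^ ((i : ℕ) + 1)

theorem esum_eq {n : ℕ} (A : Finset (Fin n)) :
    esum A = 2 * ∑ i ∈ A.map Fin.valEmbedding, 2 ^ i := by
  rw [esum, Finset.sum_map, Finset.mul_sum]
  exact Finset.sum_congr rfl fun i _ => by simp [pow_succ, mul_comm]

theorem esum_inj {n : ℕ} {A B : Finset (Fin n)} (h : esum A = esum B) : A = B := by
  rw [esum_eq, esum_eq] at h
  have := Finset.geomSum_injective (n := 2) le_rfl (Nat.eq_of_mul_eq_mul_left two_pos h)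
  exact Finset.map_injective _ this

theorem esum_even {n : ℕ} (A : Finset (Fin n)) : esum A % 2 = 0 := by
  rw [esum_eq]; omega

theorem esum_univ (n : ℕ) : esum (univ : Finset (Fin n)) + 2 = 2 ^ (n + 1) := by
  induction n with
  | zero => simp [esum]
  | succ n ih =>
    rw [esum] at *
    rw [Fin.sum_univ_castSucc]
    simp only [Fin.val_castSucc, Fin.val_last]
    rw [pow_succ 2 (n + 1)]
    omega

theorem esum_le {n : ℕ} (A : Finset (Fin n)) : esum A + 2 ≤ 2 ^ (n + 1) := by
  rw [← esum_univ]
  have : esum A ≤ esum (univ : Finset (Fin n)) :=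
    Finset.sum_le_sum_of_subset (Finset.subset_univ A)
  omega

theorem esum_surj {n : ℕ} : ∀ k : ℕ, k % 2 = 0 → k + 2 ≤ 2 ^ (n + 1) →
    ∃ A : Finset (Fin n), esum A = k := by
  induction n with
  | zero => intro k h1 h2; exact ⟨∅, by simp [esum]; omega⟩
  | succ n ih =>
    intro k h1 h2
    have hm : ∀ A : Finset (Fin n), esum (A.map Fin.castSuccEmb) = esum A := by
      intro A; rw [esum, Finset.sum_map]; rfl
    rw [pow_succ] at h2
    have h3 : 2 ^ (n + 1) % 2 = 0 := by rw [pow_succ]; omega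
    by_cases h : k < 2 ^ (n + 1)
    · obtain ⟨A, hA⟩ := ih k h1 (by omega)
      exact ⟨_, (hm A).trans hA⟩
    · obtain ⟨A, hA⟩ := ih (k - 2 ^ (n + 1)) (by omega) (by omega)
      refine ⟨insert (Fin.last n) (A.map Fin.castSuccEmb), ?_⟩
      rw [esum, Finset.sum_insert (by simp [Fin.castSucc_ne_last])]
      have := hm A
      rw [esum] at this
      rw [this, hA, Fin.val_last]; omega

/-- The position of the odd weight. -/
def qpos (n : ℕ) : Fin (n + 1) := ⟨n - 2, by omega⟩

/-- Subset of `[n+1]` not containing the odd weight. -/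
def emb {n : ℕ} (A : Finset (Fin n)) : Finset (Fin (n + 1)) :=
  A.map (qpos n).succAboveEmb

/-- Subset of `[n+1]` containing the odd weight. -/
def embq {n : ℕ} (A : Finset (Fin n)) : Finset (Fin (n + 1)) := insert (qpos n) (emb A)

theorem qpos_notMem {n : ℕ} (A : Finset (Fin n)) : qpos n ∉ emb A := by
  simp [emb, Fin.succAbove_ne]

theorem emb_cases {n : ℕ} (C : Finset (Fin (n + 1))) :
    ∃ A : Finset (Fin n), C = emb A ∨ C = embq A := by
  refine ⟨univ.filter fun i => (qpos n).succAbove i ∈ C, ?_⟩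
  by_cases h : qpos n ∈ C
  · right
    ext x
    rcases Fin.eq_self_or_eq_succAbove (qpos n) x with rfl | ⟨y, rfl⟩
    · simp [embq, h]
    · simp [embq, emb, Fin.succAbove_ne]
  · left
    ext x
    rcases Fin.eq_self_or_eq_succAbove (qpos n) x with rfl | ⟨y, rfl⟩
    · simp [h, qpos_notMem]
    · simp [emb]

theorem emb_inj {n : ℕ} {A B : Finset (Fin n)} (h : emb A = emb B) : A = B :=
  Finset.map_injective _ h

theorem embq_inj {n : ℕ} {A B : Finset (Fin n)} (h : embq A = embq B) : A = B := by
  apply emb_inj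
  have := congrArg (fun s => s.erase (qpos n)) h
  simpa [embq, qpos_notMem] using this

theorem usum_emb {n : ℕ} (hn : 3 ≤ n) (A : Finset (Fin n)) :
    usum (mvec n) (emb A) = esum A := by
  rw [usum, emb, esum, Finset.sum_map]
  refine Finset.sum_congr rfl fun i _ => ?_
  have hi := i.isLt
  simp only [Fin.coe_succAboveEmb, mvec, Fin.succAbove, Fin.lt_def, qpos, Fin.val_castSucc]
  split_ifs with h1 h2 h3 h4 h5 h6 h7
  all_goals first
    | rfl
    | (simp only [Fin.val_castSucc, Fin.val_succ] at *; first | omega | (congr 1; omega))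

theorem usum_embq {n : ℕ} (hn : 3 ≤ n) (A : Finset (Fin n)) :
    usum (mvec n) (embq A) = esum A + qn n := by
  have h := usum_emb hn A
  rw [usum] at *
  rw [embq, Finset.sum_insert (qpos_notMem A), h, add_comm]
  congr 1
  have h1 : ¬ ((qpos n : ℕ) + 1 ≤ n - 2) := by simp [qpos]
  have h2 : (qpos n : ℕ) + 1 = n - 1 := by simp only [qpos]; omega
  rw [mvec, if_neg h1, if_pos h2]

theorem usum_inj {n : ℕ} (hn : 3 ≤ n) {A B : Finset (Fin (n + 1))}
    (h : usum (mvec n) A = usum (mvec n) B) : A = B := by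
  obtain ⟨hq, -⟩ := qn_facts hn
  obtain ⟨X, rfl | rfl⟩ := emb_cases A <;> obtain ⟨Y, rfl | rfl⟩ := emb_cases B <;>
    simp only [usum_emb hn, usum_embq hn] at h <;>
    have hX := esum_even X <;> have hY := esum_even Y
  · rw [esum_inj h]
  · omega
  · omega
  · rw [esum_inj (Nat.add_right_cancel h)]

theorem cpLT_iff {n : ℕ} (hn : 3 ≤ n) (A B : Finset (Fin (n + 1))) :
    cpLT (uord (mvec n)) A B ↔ usum (mvec n) A < usum (mvec n) B := by
  constructor
  · rintro ⟨h, hne⟩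
    exact lt_of_le_of_ne h fun h' => hne (usum_inj hn h')
  · intro h
    exact ⟨h.le, fun h' => by rw [h'] at h; exact lt_irrefl _ h⟩

theorem flippable_iff {n : ℕ} (hn : 3 ≤ n) (A B : Finset (Fin (n + 1))) :
    Flippable (uord (mvec n)) A B ↔
      Disjoint A B ∧ usum (mvec n) B = usum (mvec n) A + 1 := by
  obtain ⟨hq, hq'⟩ := qn_facts hn
  have hp1 : 2 ^ (n + 1) = 4 * 2 ^ (n - 1) := by
    obtain ⟨k, rfl⟩ : ∃ k, n = k + 1 := ⟨n - 1, by omega⟩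
    rw [Nat.add_sub_cancel, pow_succ, pow_succ]; ring
  simp only [Flippable, Critical, cpLT_iff hn]
  constructor
  · rintro ⟨⟨hd, hlt, hno⟩, hD⟩
    refine ⟨hd, ?_⟩
    by_contra hne
    obtain ⟨X, hX⟩ := emb_cases A
    obtain ⟨Y, hY⟩ := emb_cases B
    have eX := esum_even X
    have eY := esum_even Y
    have lX := esum_le X
    have lY := esum_le Y
    rcases hX with rfl | rfl <;> rcases hY with rfl | rfl <;>
      simp only [usum_emb hn, usum_embq hn] at hlt hne hno
    · by_cases h4 : esum X + 2 < esum Y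
      · obtain ⟨C, hC⟩ := esum_surj (n := n) (esum X + 2) (by omega) (by omega)
        exact hno ⟨emb C, by rw [usum_emb hn]; omega, by rw [usum_emb hn]; omega⟩
      by_cases h5 : qn n ≤ esum X + 1
      · obtain ⟨C, hC⟩ := esum_surj (n := n) (esum X + 1 - qn n) (by omega) (by omega)
        exact hno ⟨embq C, by rw [usum_embq hn]; omega, by rw [usum_embq hn]; omega⟩
      · obtain ⟨C, hC⟩ := esum_surj (n := n) (esum X + 1 + qn n) (by omega) (by omega)
        have hu : ∀ Z : Finset (Fin n), emb Z ∪ {qpos n} = embq Z := by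
          intro Z; rw [embq, Finset.union_comm, Finset.insert_eq]
        refine hD {qpos n} (by simp [qpos_notMem]) ⟨emb C, ?_, ?_⟩ <;>
          rw [hu, usum_emb hn, usum_embq hn] <;> omega
    · by_cases h6 : esum X + 4 ≤ 2 ^ (n + 1)
      · obtain ⟨C, hC⟩ := esum_surj (n := n) (esum X + 2) (by omega) (by omega)
        exact hno ⟨emb C, by rw [usum_emb hn]; omega, by rw [usum_emb hn]; omega⟩
      · have hXu : X = univ := by
          apply esum_inj
          have := esum_univ n
          omega
        have hYe : Y = ∅ := by
          subst hXu
          rw [Finset.eq_empty_iff_forall_notMem]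
          intro y hy
          have h1 : (qpos n).succAbove y ∈ emb (univ : Finset (Fin n)) := by simp [emb]
          have h2 : (qpos n).succAbove y ∈ embq Y := by simp [embq, emb, hy]
          exact Finset.disjoint_left.1 hd h1 h2
        have : esum Y = 0 := by rw [hYe]; simp [esum]
        omega
    · obtain ⟨C, hC⟩ := esum_surj (n := n) (esum X + qn n + 1) (by omega) (by omega)
      exact hno ⟨emb C, by rw [usum_emb hn]; omega, by rw [usum_emb hn]; omega⟩
    · exact absurd hd (Finset.not_disjoint_iff.2 ⟨qpos n, by simp [embq], by simp [embq]⟩)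
  · rintro ⟨hd, h⟩
    refine ⟨⟨hd, by omega, ?_⟩, ?_⟩
    · rintro ⟨C, h1, h2⟩; omega
    · rintro D hD ⟨C, h1, h2⟩
      rw [Finset.disjoint_union_right] at hD
      have hu : ∀ Z : Finset (Fin (n + 1)), Disjoint D Z →
          usum (mvec n) (Z ∪ D) = usum (mvec n) Z + usum (mvec n) D :=
        fun Z hZ => Finset.sum_union hZ.symm
      rw [hu _ hD.1] at h1
      rw [hu _ hD.2] at h2
      omega

theorem disjoint_emb {n : ℕ} (A B : Finset (Fin n)) :
    Disjoint (emb A) (emb B) ↔ Disjoint A B := Finset.disjoint_map _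

theorem disjoint_emb_embq {n : ℕ} (A B : Finset (Fin n)) :
    Disjoint (emb A) (embq B) ↔ Disjoint A B := by
  rw [embq, Finset.disjoint_insert_right, disjoint_emb]
  simp [qpos_notMem]

theorem disjoint_embq_emb {n : ℕ} (A B : Finset (Fin n)) :
    Disjoint (embq A) (emb B) ↔ Disjoint A B := by
  rw [disjoint_comm, disjoint_emb_embq, disjoint_comm]

theorem emb_ne_embq {n : ℕ} (A B : Finset (Fin n)) : emb A ≠ embq B := fun h =>
  qpos_notMem A (by rw [h]; simp [embq])

/-- The number of flippable pairs of `≼_{mvec n}` equals `g_n + h_n`. -/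
theorem stmt9 {n : ℕ} (hn : 3 ≤ n) :
    (FlippablePairs (uord (mvec n))).ncard = gfun n + hfun n := by
  obtain ⟨hq, -⟩ := qn_facts hn
  let f : Finset (Fin n) × Finset (Fin n) → Finset (Fin (n + 1)) × Finset (Fin (n + 1)) :=
    fun p => (embq p.1, emb p.2)
  let g : Finset (Fin n) × Finset (Fin n) → Finset (Fin (n + 1)) × Finset (Fin (n + 1)) :=
    fun p => (emb p.2, embq p.1)
  have hf : Function.Injective f := by
    rintro ⟨a, b⟩ ⟨c, d⟩ h
    obtain ⟨h1, h2⟩ := Prod.mk.inj h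
    exact Prod.ext (embq_inj h1) (emb_inj h2)
  have hg : Function.Injective g := by
    rintro ⟨a, b⟩ ⟨c, d⟩ h
    obtain ⟨h1, h2⟩ := Prod.mk.inj h
    exact Prod.ext (embq_inj h2) (emb_inj h1)
  have key : FlippablePairs (uord (mvec n)) =
      f '' diffPairs n (qn n + 1) ∪ g '' diffPairs n (qn n - 1) := by
    ext ⟨A, B⟩
    constructor
    · intro h
      obtain ⟨hd, hs⟩ := (flippable_iff hn A B).1 h
      obtain ⟨X, hX⟩ := emb_cases A
      obtain ⟨Y, hY⟩ := emb_cases B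
      have eX := esum_even X
      have eY := esum_even Y
      rcases hX with rfl | rfl <;> rcases hY with rfl | rfl <;>
        simp only [usum_emb hn, usum_embq hn] at hs
      · omega
      · right
        refine ⟨(Y, X), ⟨((disjoint_emb_embq _ _).1 hd).symm, ?_⟩, rfl⟩
        change esum X = esum Y + (qn n - 1)
        omega
      · left
        refine ⟨(X, Y), ⟨(disjoint_embq_emb _ _).1 hd, ?_⟩, rfl⟩
        change esum Y = esum X + (qn n + 1)
        omega
      · omega
    · rintro (⟨⟨X, Y⟩, ⟨hd, hs⟩, h⟩ | ⟨⟨X, Y⟩, ⟨hd, hs⟩, h⟩)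
      · change esum Y = esum X + (qn n + 1) at hs
        obtain ⟨rfl, rfl⟩ := Prod.mk.inj h
        refine (flippable_iff hn _ _).2 ⟨(disjoint_embq_emb _ _).2 hd, ?_⟩
        simp only [usum_emb hn, usum_embq hn]
        omega
      · change esum Y = esum X + (qn n - 1) at hs
        obtain ⟨rfl, rfl⟩ := Prod.mk.inj h
        refine (flippable_iff hn _ _).2 ⟨(disjoint_emb_embq _ _).2 hd.symm, ?_⟩
        simp only [usum_emb hn, usum_embq hn]
        omega
  have hdis : Disjoint (f '' diffPairs n (qn n + 1)) (g '' diffPairs n (qn n - 1)) := by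
    rw [Set.disjoint_left]
    rintro _ ⟨p, -, rfl⟩ ⟨r, -, h⟩
    exact emb_ne_embq _ _ (Prod.mk.inj h).1
  rw [key, Set.ncard_union_eq hdis (Set.toFinite _) (Set.toFinite _),
    Set.ncard_image_of_injective _ hf, Set.ncard_image_of_injective _ hg, gfun, hfun]
end
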